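/- Consider the ODE system on the torus 𝒦̂ = 𝕋^{n+ℓ+m+1} with angular coordinates (φ₁,…,φₙ, v₁,…,v_ℓ, y, q₁,…,qₘ): φ̇ᵢ = ωᵢ, v̇ₖ = 0, ẏ = Σₖ sin²vₖ + sin²y + Σⱼ sin²qⱼ, q̇ⱼ = 0. This system is reversible with respect to the involution G : (φ, v, y, q) ↦ (−φ, v, −y, −q). If a solution z : ℝ → 𝒦̂ is entirely contained in the domain {−π < vₖ < π (1 ≤ k ≤ ℓ), −π < y < π, −π < qⱼ < π (1 ≤ j ≤ m)} (modulo 2π) and is recurrent (there is a sequence t_k → +∞ with z(t_k) → z(0)), then z(0) lies on the n-torus {v = 0, y = 0, q = 0}. Consequently this symmetric Kronecker n-torus with frequency vector ω is isolated: it is the only Kronecker torus entirely contained in that domain. -/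

import Mathlib

open Real Filter Topology

/-!
The equation for `y` makes `y` nondecreasing. If its class in `ℝ/2πℤ` never meets `π`, then the
lift `y` is trapped between two consecutive lifts of `π`, so it converges, and its class has exactly
one cluster point as `t → +∞`. Recurrence identifies this cluster point with the class of `y t₀`;
hence `y` is maximal at `t₀`, its derivative vanishes there, and so does every squared sine in that
derivative. The only zero of the sine on the circle other than `0` is the excluded point `π`.
-/

section CircleLifts

variable {p : ℝ} [Fact (0 < p)]

lemma exists_forall_mem_Ioo_of_forall_coe_ne {X : Type*} [TopologicalSpace X]
    [PreconnectedSpace X] {f : X → ℝ} (hf : Continuous f) {c : AddCircle p}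
    (hc : ∀ x, (f x : AddCircle p) ≠ c) : ∃ a : ℝ, ∀ x, f x ∈ Set.Ioo a (a + p) := by
  cases isEmpty_or_nonempty X with
  | inl _ => exact ⟨0, isEmptyElim⟩
  | inr h =>
    obtain ⟨x₀⟩ := h
    obtain ⟨b, ⟨hb_ge, hb_lt⟩, rfl⟩ : c ∈ ((↑) : ℝ → AddCircle p) '' Set.Ico (f x₀) (f x₀ + p) :=
      AddCircle.coe_image_Ico_eq p (f x₀) ▸ Set.mem_univ c
    have b_notMem : b ∉ Set.range f := fun ⟨x, hx⟩ => hc x (congrArg _ hx)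
    have b_sub_notMem : b - p ∉ Set.range f := fun ⟨x, hx⟩ => hc x <| by
      rw [hx, AddCircle.coe_sub, AddCircle.coe_period, sub_zero]
    refine ⟨b - p, fun x => ⟨?_, ?_⟩⟩
    · by_contra! hx
      exact b_sub_notMem (mem_range_of_exists_le_of_exists_ge hf ⟨x, hx⟩ ⟨x₀, by linarith⟩)
    · by_contra! hx
      exact b_notMem (mem_range_of_exists_le_of_exists_ge hf ⟨x₀, hb_ge⟩ ⟨x, by linarith⟩)

lemma le_of_monotone_of_mapClusterPt_coe {α : Type*} [Preorder α] {f : α → ℝ} (hf : Monotone f)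
    {a : ℝ} (hfa : ∀ t, f t ∈ Set.Ioo a (a + p)) {t₀ : α}
    (ht₀ : MapClusterPt (f t₀ : AddCircle p) atTop fun t => (f t : AddCircle p)) (t : α) :
    f t ≤ f t₀ := by
  have : Nonempty α := ⟨t₀⟩
  have hbdd : BddAbove (Set.range f) := ⟨a + p, Set.forall_mem_range.2 fun s => (hfa s).2.le⟩
  have hlim : Tendsto (fun s => (f s : AddCircle p)) atTop (𝓝 ((⨆ s, f s : ℝ) : AddCircle p)) :=
    ((AddCircle.continuous_mk' p).tendsto _).comp (tendsto_atTop_ciSup hf hbdd)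
  have hcoe : (f t₀ : AddCircle p) = ((⨆ s, f s : ℝ) : AddCircle p) :=
    eq_of_nhds_neBot (ht₀.clusterPt.mono hlim)
  have hsup : ⨆ s, f s ∈ Set.Ioc a (a + p) :=
    ⟨(hfa t₀).1.trans_le (le_ciSup hbdd t₀), ciSup_le fun s => (hfa s).2.le⟩
  have heq : f t₀ = ⨆ s, f s :=
    congrArg Subtype.val <| (AddCircle.equivIoc p a).symm.injective
      (a₁ := ⟨f t₀, Set.Ioo_subset_Ioc_self (hfa t₀)⟩) (a₂ := ⟨_, hsup⟩) hcoe
  exact heq ▸ le_ciSup hbdd t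

lemma hasDerivAt_eq_zero_of_nonneg_of_mapClusterPt_coe {f f' : ℝ → ℝ}
    (hf : ∀ t, HasDerivAt f (f' t) t) (hf' : ∀ t, 0 ≤ f' t) {c : AddCircle p}
    (hc : ∀ t, (f t : AddCircle p) ≠ c) {t₀ : ℝ}
    (ht₀ : MapClusterPt (f t₀ : AddCircle p) atTop fun t => (f t : AddCircle p)) :
    f' t₀ = 0 := by
  have hcont : Continuous f := continuous_iff_continuousAt.2 fun t => (hf t).continuousAt
  obtain ⟨a, ha⟩ := exists_forall_mem_Ioo_of_forall_coe_ne hcont hc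
  have hmax : IsLocalMax f t₀ := .of_forall <|
    le_of_monotone_of_mapClusterPt_coe (monotone_of_hasDerivAt_nonneg hf hf') ha ht₀
  exact hmax.hasDerivAt_eq_zero (hf t₀)

end CircleLifts

lemma coe_ne_coe_pi_of_exists_sub_mem_Ioo {x : ℝ}
    (hx : ∃ a : ℤ, x - 2 * π * a ∈ Set.Ioo (-π) π) : (x : AddCircle (2 * π)) ≠ (π : ℝ) := by
  intro h
  obtain ⟨a, ha⟩ := hx
  have hcoe : ((x - 2 * π * a : ℝ) : Real.Angle) = (π : ℝ) :=
    (Real.Angle.angle_eq_iff_two_pi_dvd_sub.2 ⟨-a, by push_cast; ring⟩ :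
      ((x - 2 * π * a : ℝ) : Real.Angle) = x).trans h
  have htoReal := congrArg Real.Angle.toReal hcoe
  rw [Real.Angle.toReal_coe_eq_self_iff_mem_Ioc.2 (Set.Ioo_subset_Ioc_self ha),
    Real.Angle.toReal_pi] at htoReal
  exact ha.2.ne htoReal

lemma coe_eq_zero_of_sin_eq_zero {x : ℝ} (hsin : Real.sin x = 0)
    (hx : (x : AddCircle (2 * π)) ≠ (π : ℝ)) : (x : AddCircle (2 * π)) = 0 :=
  (Real.Angle.sin_eq_zero_iff (θ := (x : Real.Angle)).1 hsin).resolve_right hx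

section HasDerivAtReflection

variable {𝕜 E : Type*} [NontriviallyNormedField 𝕜] [NormedAddCommGroup E] [NormedSpace 𝕜 E]
  {f : 𝕜 → E} {f' : E} {t : 𝕜}

lemma hasDerivAt_comp_neg (hf : HasDerivAt f f' (-t)) : HasDerivAt (fun s => f (-s)) (-f') t :=
  neg_one_smul 𝕜 f' ▸ hf.scomp t (hasDerivAt_neg t)

lemma hasDerivAt_neg_comp_neg (hf : HasDerivAt f f' (-t)) :
    HasDerivAt (fun s => -f (-s)) f' t := by
  simpa using (hasDerivAt_comp_neg hf).fun_neg

end HasDerivAtReflection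

section SinSqDrift

variable {ι κ μ : Type*} [Fintype κ] [Fintype μ]

/-- The right-hand side `∑ₖ sin² vₖ + sin² y + ∑ⱼ sin² qⱼ` of the equation for `y`. -/
noncomputable def sinSqDrift (v : κ → ℝ) (y : ℝ) (q : μ → ℝ) : ℝ :=
  (∑ k, Real.sin (v k) ^ 2) + Real.sin y ^ 2 + ∑ j, Real.sin (q j) ^ 2

/-- The curve `(φ, v, y, q)`, given by real lifts of its angular coordinates, is a solution of
`φ̇ = ω`, `v̇ = 0`, `ẏ = sinSqDrift v y q`, `q̇ = 0`. -/
structure IsSinSqDriftSolution (ω : ι → ℝ) (φ : ℝ → ι → ℝ) (v : ℝ → κ → ℝ) (y : ℝ → ℝ)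
    (q : ℝ → μ → ℝ) : Prop where
  hasDerivAt_φ : ∀ t i, HasDerivAt (fun s => φ s i) (ω i) t
  hasDerivAt_v : ∀ t k, HasDerivAt (fun s => v s k) 0 t
  hasDerivAt_y : ∀ t, HasDerivAt y (sinSqDrift (v t) (y t) (q t)) t
  hasDerivAt_q : ∀ t j, HasDerivAt (fun s => q s j) 0 t

lemma sinSqDrift_nonneg (v : κ → ℝ) (y : ℝ) (q : μ → ℝ) : 0 ≤ sinSqDrift v y q := by
  unfold sinSqDrift
  positivity

lemma sinSqDrift_eq_zero_iff {v : κ → ℝ} {y : ℝ} {q : μ → ℝ} :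
    sinSqDrift v y q = 0 ↔
      (∀ k, Real.sin (v k) = 0) ∧ Real.sin y = 0 ∧ ∀ j, Real.sin (q j) = 0 := by
  have hv : 0 ≤ ∑ k, Real.sin (v k) ^ 2 := by positivity
  have hq : 0 ≤ ∑ j, Real.sin (q j) ^ 2 := by positivity
  rw [sinSqDrift, add_eq_zero_iff_of_nonneg (by positivity) hq,
    add_eq_zero_iff_of_nonneg hv (sq_nonneg _),
    Finset.sum_eq_zero_iff_of_nonneg fun _ _ => sq_nonneg _,
    Finset.sum_eq_zero_iff_of_nonneg fun _ _ => sq_nonneg _]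
  simp only [Finset.mem_univ, true_imp_iff, sq_eq_zero_iff, and_assoc]

lemma sinSqDrift_neg_neg (v : κ → ℝ) (y : ℝ) (q : μ → ℝ) :
    sinSqDrift v (-y) (fun j => -q j) = sinSqDrift v y q := by
  simp only [sinSqDrift, Real.sin_neg, neg_sq]

lemma IsSinSqDriftSolution.reverse {ω : ι → ℝ} {φ : ℝ → ι → ℝ} {v : ℝ → κ → ℝ} {y : ℝ → ℝ}
    {q : ℝ → μ → ℝ} (h : IsSinSqDriftSolution ω φ v y q) :
    IsSinSqDriftSolution ω (fun t i => -φ (-t) i) (fun t => v (-t)) (fun t => -y (-t))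
      (fun t j => -q (-t) j) where
  hasDerivAt_φ t i := hasDerivAt_neg_comp_neg (h.hasDerivAt_φ (-t) i)
  hasDerivAt_v t k := by simpa using hasDerivAt_comp_neg (h.hasDerivAt_v (-t) k)
  hasDerivAt_y t := by
    rw [sinSqDrift_neg_neg]
    exact hasDerivAt_neg_comp_neg (h.hasDerivAt_y (-t))
  hasDerivAt_q t j := hasDerivAt_neg_comp_neg (h.hasDerivAt_q (-t) j)

theorem isolated_symmetric_kronecker_torus_compact_general (ω : ι → ℝ) :
    (∀ (φ : ℝ → ι → ℝ) (v : ℝ → κ → ℝ) (y : ℝ → ℝ) (q : ℝ → μ → ℝ),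
      IsSinSqDriftSolution ω φ v y q →
      IsSinSqDriftSolution ω (fun t i => -φ (-t) i) (fun t => v (-t)) (fun t => -y (-t))
        (fun t j => -q (-t) j)) ∧
    (∀ (v : ℝ → κ → ℝ) (y : ℝ → ℝ) (q : ℝ → μ → ℝ) (t₀ : ℝ),
      (∀ t, HasDerivAt y (sinSqDrift (v t) (y t) (q t)) t) →
      (∀ k, (v t₀ k : AddCircle (2 * π)) ≠ (π : ℝ)) →
      (∀ t, (y t : AddCircle (2 * π)) ≠ (π : ℝ)) →
      (∀ j, (q t₀ j : AddCircle (2 * π)) ≠ (π : ℝ)) →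
      MapClusterPt (y t₀ : AddCircle (2 * π)) atTop (fun t => (y t : AddCircle (2 * π))) →
      (∀ k, (v t₀ k : AddCircle (2 * π)) = 0) ∧ (y t₀ : AddCircle (2 * π)) = 0 ∧
        ∀ j, (q t₀ j : AddCircle (2 * π)) = 0) := by
  refine ⟨fun φ v y q h => h.reverse, fun v y q t₀ hy hvπ hyπ hqπ hrec => ?_⟩
  have : Fact (0 < 2 * π) := ⟨two_pi_pos⟩
  have hdrift : sinSqDrift (v t₀) (y t₀) (q t₀) = 0 :=
    hasDerivAt_eq_zero_of_nonneg_of_mapClusterPt_coe hy (fun _ => sinSqDrift_nonneg ..) hyπ hrec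
  obtain ⟨hv, hy₀, hq⟩ := sinSqDrift_eq_zero_iff.1 hdrift
  exact ⟨fun k => coe_eq_zero_of_sin_eq_zero (hv k) (hvπ k),
    coe_eq_zero_of_sin_eq_zero hy₀ (hyπ t₀), fun j => coe_eq_zero_of_sin_eq_zero (hq j) (hqπ j)⟩

end SinSqDrift

/-- **Isolatedness of the symmetric Kronecker n-torus of the compactified
reversible system** `φ̇ᵢ = ωᵢ, v̇ₖ = 0, ẏ = Σₖ sin²vₖ + sin²y + Σⱼ sin²qⱼ,
q̇ⱼ = 0` on 𝒦̂ = 𝕋^{n+ℓ+m+1} (all coordinates angular, represented by real lifts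
and compared in ℝ/2πℤ = `AddCircle (2π)`).
(1) The system is reversible with respect to the involution
`G : (φ, v, y, q) ↦ (−φ, v, −y, −q)`: whenever `(φ, v, y, q)` is a solution, so
is `t ↦ (−φ(−t), v(−t), −y(−t), −q(−t))`.
(2) If a solution is entirely contained (mod 2π) in the domain
`{−π < vₖ < π, −π < y < π, −π < qⱼ < π}` and is recurrent (there is a sequence
of times `tₖ → +∞` along which it returns to its initial point), then its
initial point lies on the n-torus {v = 0, y = 0, q = 0}. Consequently this
symmetric Kronecker n-torus with frequency vector ω is isolated: it is the only
Kronecker torus entirely contained in that domain. -/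
theorem isolated_symmetric_kronecker_torus_compact
    (n l m : ℕ) (ω : Fin n → ℝ) :
    -- (1) reversibility with respect to G : (φ, v, y, q) ↦ (−φ, v, −y, −q)
    (∀ (φ : ℝ → Fin n → ℝ) (v : ℝ → Fin l → ℝ) (y : ℝ → ℝ) (q : ℝ → Fin m → ℝ),
      (∀ t i, HasDerivAt (fun s => φ s i) (ω i) t) →
      (∀ t k, HasDerivAt (fun s => v s k) 0 t) →
      (∀ t, HasDerivAt y ((∑ k, Real.sin (v t k) ^ 2) + Real.sin (y t) ^ 2
        + ∑ j, Real.sin (q t j) ^ 2) t) →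
      (∀ t j, HasDerivAt (fun s => q s j) 0 t) →
      ((∀ t i, HasDerivAt (fun s => -φ (-s) i) (ω i) t) ∧
       (∀ t k, HasDerivAt (fun s => v (-s) k) 0 t) ∧
       (∀ t, HasDerivAt (fun s => -y (-s))
         ((∑ k, Real.sin (v (-t) k) ^ 2) + Real.sin (-y (-t)) ^ 2
           + ∑ j, Real.sin (-q (-t) j) ^ 2) t) ∧
       (∀ t j, HasDerivAt (fun s => -q (-s) j) 0 t))) ∧
    -- (2) a recurrent solution in the domain lies on the torus {v = 0, y = 0, q = 0}
    (∀ (φ : ℝ → Fin n → ℝ) (v : ℝ → Fin l → ℝ) (y : ℝ → ℝ) (q : ℝ → Fin m → ℝ),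
      (∀ t i, HasDerivAt (fun s => φ s i) (ω i) t) →
      (∀ t k, HasDerivAt (fun s => v s k) 0 t) →
      (∀ t, HasDerivAt y ((∑ k, Real.sin (v t k) ^ 2) + Real.sin (y t) ^ 2
        + ∑ j, Real.sin (q t j) ^ 2) t) →
      (∀ t j, HasDerivAt (fun s => q s j) 0 t) →
      -- containment in the domain, mod 2π
      (∀ t k, ∃ a : ℤ, v t k - 2 * π * a ∈ Set.Ioo (-π) π) →
      (∀ t, ∃ a : ℤ, y t - 2 * π * a ∈ Set.Ioo (-π) π) →
      (∀ t j, ∃ a : ℤ, q t j - 2 * π * a ∈ Set.Ioo (-π) π) →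
      -- recurrence
      ∀ tk : ℕ → ℝ, Tendsto tk atTop atTop →
      (∀ i, Tendsto (fun k => ((φ (tk k) i : ℝ) : AddCircle (2 * π)))
        atTop (𝓝 ((φ 0 i : ℝ) : AddCircle (2 * π)))) →
      (∀ k', Tendsto (fun k => ((v (tk k) k' : ℝ) : AddCircle (2 * π)))
        atTop (𝓝 ((v 0 k' : ℝ) : AddCircle (2 * π)))) →
      Tendsto (fun k => ((y (tk k) : ℝ) : AddCircle (2 * π)))
        atTop (𝓝 ((y 0 : ℝ) : AddCircle (2 * π))) →
      (∀ j, Tendsto (fun k => ((q (tk k) j : ℝ) : AddCircle (2 * π)))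
        atTop (𝓝 ((q 0 j : ℝ) : AddCircle (2 * π)))) →
      ((∀ k', ((v 0 k' : ℝ) : AddCircle (2 * π)) = 0) ∧
       ((y 0 : ℝ) : AddCircle (2 * π)) = 0 ∧
       (∀ j, ((q 0 j : ℝ) : AddCircle (2 * π)) = 0))) := by
  obtain ⟨reversible, recurrent⟩ := isolated_symmetric_kronecker_torus_compact_general
    (κ := Fin l) (μ := Fin m) ω
  refine ⟨fun φ v y q hφ hv hy hq => ?_, fun _ v y q _ _ hy _ hvπ hyπ hqπ tk htk _ _ hrec _ => ?_⟩
  · obtain ⟨hφ', hv', hy', hq'⟩ := reversible φ v y q ⟨hφ, hv, hy, hq⟩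
    exact ⟨hφ', hv', hy', hq'⟩
  · have ne_pi {x : ℝ} := coe_ne_coe_pi_of_exists_sub_mem_Ioo (x := x)
    exact recurrent v y q 0 hy (fun k => ne_pi (hvπ 0 k)) (fun t => ne_pi (hyπ t))
      (fun j => ne_pi (hqπ 0 j)) (hrec.mapClusterPt.of_comp htk)
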